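/- Let n be a positive integer, let τ be a complex number with Im(τ) > 0, set q = e^{πiτ} and τ' = -1/τ. Then (1/n) · (θ₁'(0 | τ'/n) / θ₁'(0 | τ')) · (θ₁(π/2 | τ') / θ₁(π/2 | τ'/n)) = q^{(n-1)/4} · ((q^{2n}; q^{2n})_∞)² ((q; q²)_∞)² / (((q^n; q^{2n})_∞)² ((q²; q²)_∞)²), where θ₁' denotes the derivative of θ₁(z | τ) with respect to z and q^{(n-1)/4} denotes e^{πiτ(n-1)/4}. -/

import Mathlib

open Complex

/-- Infinite q-Pochhammer symbol `(a; q)_∞ = ∏_{i=0}^∞ (1 - a qⁱ)`. -/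
noncomputable def qPoch (a q : ℂ) : ℂ := ∏' i : ℕ, (1 - a * q ^ i)

/-- Jacobi's first theta function
`θ₁(z | τ) = 2 ∑_{n=0}^∞ (-1)ⁿ e^{πiτ(2n+1)²/4} sin((2n+1)z)`. -/
noncomputable def theta1 (z τ : ℂ) : ℂ :=
  2 * ∑' n : ℕ, (-1 : ℂ) ^ n * Complex.exp (Real.pi * Complex.I * τ * (2 * n + 1) ^ 2 / 4) *
    Complex.sin ((2 * n + 1) * z)

/-- The derivative of `θ₁(z | τ)` with respect to `z`. -/
noncomputable def theta1' (z τ : ℂ) : ℂ := deriv (fun w => theta1 w τ) z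

/-!
A Pascal recursion gives the `q`-binomial theorem and from it a finite triple product; letting its
length tend to infinity by dominated convergence yields Jacobi's triple product, hence the classical
factorization of `θ₁(z | τ)` as `2 q^{1/4} sin z` times infinite products. With `q = e^{πiτ}` it
evaluates `θ₁'(0 | τ) = 2 q^{1/4} (q²; q²)_∞³` and
`θ₁(πτ/2 | τ) = i q^{-1/4} (q²; q²)_∞ (q; q²)_∞²`.

The imaginary transformation `τ ↦ -1/τ` expresses `θ₁'(0 | -1/τ)` and `θ₁(π/2 | -1/τ)` through these
two values. Its factor `√(-iτ)` cancels in the quotient `θ₁'(0) / θ₁(π/2)`, and the theorem compares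
this quotient at `-1/τ` and at `-1/(nτ)`.
-/

open Filter Topology Finset
open scoped Real

section GaussBinom

/-- The Gaussian binomial coefficient `[n, k]_p`. It is defined by a Pascal recursion rather than
as a quotient, so that it makes sense in every semiring. -/
def gaussBinom {R : Type*} [Semiring R] (p : R) : ℕ → ℕ → R
  | _, 0 => 1
  | 0, _ + 1 => 0
  | n + 1, k + 1 => gaussBinom p n k + p ^ (k + 1) * gaussBinom p n (k + 1)

/-- The finite q-Pochhammer symbol `(a; p)_k`. -/
def qPochFin {R : Type*} [CommRing R] (a p : R) (k : ℕ) : R := ∏ i ∈ range k, (1 - a * p ^ i)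

section Semiring

variable {R : Type*} [Semiring R] (p : R)

@[simp]
lemma gaussBinom_zero_right (n : ℕ) : gaussBinom p n 0 = 1 := by
  cases n <;> rfl

lemma gaussBinom_succ_succ (n k : ℕ) :
    gaussBinom p (n + 1) (k + 1) = gaussBinom p n k + p ^ (k + 1) * gaussBinom p n (k + 1) := rfl

lemma gaussBinom_eq_zero_of_lt {n k : ℕ} (h : n < k) : gaussBinom p n k = 0 := by
  induction n generalizing k with
  | zero => cases k with
    | zero => exact absurd h (lt_irrefl 0)
    | succ k => rfl
  | succ n ih => cases k with
    | zero => exact absurd h (Nat.not_lt_zero _)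
    | succ k => rw [gaussBinom_succ_succ, ih (by lia), ih (by lia), mul_zero, add_zero]

@[simp]
lemma gaussBinom_self (n : ℕ) : gaussBinom p n n = 1 := by
  induction n with
  | zero => rfl
  | succ n ih => rw [gaussBinom_succ_succ, ih, gaussBinom_eq_zero_of_lt p n.lt_succ_self, mul_zero,
      add_zero]

end Semiring

section CommRing

variable {R : Type*} [CommRing R] (a p : R)

lemma qPochFin_succ (k : ℕ) : qPochFin a p (k + 1) = qPochFin a p k * (1 - a * p ^ k) :=
  prod_range_succ _ _

lemma gaussBinom_add_mul_qPochFin_mul_qPochFin (m k : ℕ) :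
    gaussBinom p (m + k) k * qPochFin p p k * qPochFin p p m = qPochFin p p (m + k) := by
  induction k generalizing m with
  | zero => simp [qPochFin]
  | succ k ihk => induction m with
    | zero => simp [qPochFin]
    | succ m ihm =>
      have hk := ihk (m + 1)
      rw [show m + 1 + k = m + (k + 1) by ring, qPochFin_succ _ _ m] at hk
      rw [show m + 1 + (k + 1) = m + (k + 1) + 1 by ring, gaussBinom_succ_succ,
        qPochFin_succ _ _ (m + (k + 1)), qPochFin_succ _ _ m, ← ihm]
      rw [← ihm] at hk
      rw [qPochFin_succ _ _ k] at hk ⊢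
      linear_combination (1 - p * p ^ k) * hk

end CommRing

section CommSemiring

variable {R : Type*} [CommSemiring R]

lemma add_mul_sum_range_mul_pow {a b : ℕ → R} {N : ℕ} (c x : R) (ha : a (N + 1) = 0)
    (hb_zero : b 0 = c * a 0) (hb_succ : ∀ k, b (k + 1) = a k + c * a (k + 1)) :
    (x + c) * ∑ k ∈ range (N + 1), a k * x ^ k = ∑ k ∈ range (N + 2), b k * x ^ k := by
  have hc : c * ∑ k ∈ range (N + 1), a k * x ^ k =
      ∑ k ∈ range (N + 1), c * a (k + 1) * x ^ (k + 1) + c * a 0 := by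
    have h := sum_range_succ (fun k ↦ a k * x ^ k) (N + 1)
    rw [ha, zero_mul, add_zero] at h
    rw [← h, sum_range_succ', mul_add, mul_sum, pow_zero, mul_one]
    simp only [mul_assoc]
  rw [add_mul, hc, sum_range_succ' _ (N + 1), hb_zero, pow_zero, mul_one, ← add_assoc, mul_sum,
    ← sum_add_distrib]
  congr 1
  exact sum_congr rfl fun k _ ↦ by rw [hb_succ]; ring

theorem prod_one_add_mul_pow_eq_sum_gaussBinom (p x : R) (m : ℕ) :
    ∏ i ∈ range m, (1 + x * p ^ i) =
      ∑ k ∈ range (m + 1), gaussBinom p m k * p ^ k.choose 2 * x ^ k := by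
  induction m generalizing x with
  | zero => simp
  | succ m ih =>
    have hshift : ∏ i ∈ range m, (1 + x * p ^ (i + 1)) =
        ∑ k ∈ range (m + 1), gaussBinom p m k * p ^ (k + 1).choose 2 * x ^ k := by
      simp_rw [pow_succ' p, ← mul_assoc, ih, Nat.choose_succ_succ' _ 1, Nat.choose_one_right]
      exact sum_congr rfl fun k _ ↦ by ring
    rw [prod_range_succ', hshift, pow_zero, mul_one, mul_comm, add_comm 1 x]
    refine add_mul_sum_range_mul_pow 1 x ?_ ?_ fun k ↦ ?_
    · rw [gaussBinom_eq_zero_of_lt p m.lt_succ_self, zero_mul]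
    · simp
    · rw [gaussBinom_succ_succ, Nat.choose_succ_succ' (k + 1) 1, Nat.choose_one_right]
      ring

-- The second product is `w ^ n * ∏ (1 + w⁻¹ * q ^ (2 * j + 1))`, written so that no inverse occurs.
theorem prod_mul_prod_eq_sum_gaussBinom (q w : R) (m n : ℕ) :
    (∏ i ∈ range m, (1 + w * q ^ (2 * i + 1))) * ∏ j ∈ range n, (w + q ^ (2 * j + 1)) =
      ∑ k ∈ range (m + n + 1),
        gaussBinom (q ^ 2) (m + n) k * q ^ (k - n : ℤ).natAbs ^ 2 * w ^ k := by
  induction n with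
  | zero =>
    have hexp (k : ℕ) : 2 * k.choose 2 + k = k ^ 2 := by
      rw [Nat.choose_two_right, Nat.two_mul_div_two_of_even (Nat.even_mul_pred_self k)]
      cases k with
      | zero => rfl
      | succ k => rw [Nat.add_sub_cancel]; ring
    have h := prod_one_add_mul_pow_eq_sum_gaussBinom (q ^ 2) (w * q) m
    simp only [← pow_mul, mul_pow w q] at h
    simp only [pow_succ' q (2 * _), ← mul_assoc, prod_range_zero, mul_one, h, add_zero,
      Nat.cast_zero, sub_zero, Int.natAbs_natCast, ← hexp, pow_add]
    exact sum_congr rfl fun k _ ↦ by ring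
  | succ n ih =>
    rw [prod_range_succ, ← mul_assoc, ih, mul_comm]
    refine add_mul_sum_range_mul_pow _ w ?_ ?_ fun k ↦ ?_
    · rw [gaussBinom_eq_zero_of_lt _ (m + n).lt_succ_self, zero_mul]
    · have hexp : ((0 : ℕ) - (n + 1 : ℕ) : ℤ).natAbs ^ 2 =
          2 * n + 1 + ((0 : ℕ) - n : ℤ).natAbs ^ 2 := by
        zify; simp only [sq_abs]; ring
      rw [hexp, pow_add, gaussBinom_zero_right, gaussBinom_zero_right, one_mul, one_mul]
    · have hexp : 2 * n + 1 + (↑(k + 1) - n : ℤ).natAbs ^ 2 =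
          2 * (k + 1) + (k - n : ℤ).natAbs ^ 2 := by
        zify; simp only [sq_abs]; ring
      rw [← add_assoc m n 1, gaussBinom_succ_succ, show (↑(k + 1) - ↑(n + 1) : ℤ) = k - n by
        push_cast; ring]
      calc _ = gaussBinom (q ^ 2) (m + n) k * q ^ (k - n : ℤ).natAbs ^ 2 +
            q ^ (2 * (k + 1) + (k - n : ℤ).natAbs ^ 2) * gaussBinom (q ^ 2) (m + n) (k + 1) := by
            ring
        _ = _ := by rw [← hexp]; ring

end CommSemiring

theorem prod_mul_inv_eq_sum_gaussBinom {K : Type*} [Field K] (q : K) {w : K} (hw : w ≠ 0) (N : ℕ) :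
    ∏ i ∈ range N, (1 + w * q ^ (2 * i + 1)) * (1 + w⁻¹ * q ^ (2 * i + 1)) =
      ∑ n ∈ Icc (-N : ℤ) N,
        gaussBinom (q ^ 2) (2 * N) (N + n).toNat * (q ^ n.natAbs ^ 2 * w ^ n) := by
  have hinv : ∏ i ∈ range N, (w + q ^ (2 * i + 1)) =
      w ^ N * ∏ i ∈ range N, (1 + w⁻¹ * q ^ (2 * i + 1)) := by
    simp only [pow_eq_prod_const, ← prod_mul_distrib, mul_add, mul_one,
      mul_inv_cancel_left₀ hw]
  have hsum := prod_mul_prod_eq_sum_gaussBinom q w N N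
  rw [hinv, ← mul_left_comm, ← eq_inv_mul_iff_mul_eq₀ (pow_ne_zero N hw), ← prod_mul_distrib,
    mul_sum, ← two_mul] at hsum
  rw [hsum]
  refine sum_nbij' (fun k ↦ (k - N : ℤ)) (fun n ↦ (N + n).toNat) ?_ ?_ ?_ ?_ fun k _ ↦ ?_
  · intro k hk; simp only [mem_range, mem_Icc] at hk ⊢; lia
  · intro k hk; simp only [mem_range, mem_Icc] at hk ⊢; lia
  · intro k hk; simp only [mem_range] at hk ⊢; lia
  · intro k hk; simp only [mem_Icc] at hk ⊢; lia
  · rw [add_sub_cancel, Int.toNat_natCast, zpow_sub₀ hw, zpow_natCast, zpow_natCast]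
    ring

end GaussBinom

section QPochhammer

variable {a p : ℂ}

lemma summable_norm_neg_mul_pow (a : ℂ) (hp : ‖p‖ < 1) :
    Summable fun i : ℕ ↦ ‖-(a * p ^ i)‖ := by
  simpa using (summable_geometric_of_lt_one (norm_nonneg p) hp).mul_left ‖a‖

lemma multipliable_one_sub_mul_pow (a : ℂ) (hp : ‖p‖ < 1) :
    Multipliable fun i : ℕ ↦ 1 - a * p ^ i := by
  simpa only [← sub_eq_add_neg] using
    multipliable_one_add_of_summable (summable_norm_neg_mul_pow a hp)

lemma tendsto_qPochFin (a : ℂ) (hp : ‖p‖ < 1) :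
    Tendsto (qPochFin a p) atTop (𝓝 (qPoch a p)) :=
  (multipliable_one_sub_mul_pow a hp).hasProd.tendsto_prod_nat

lemma qPoch_eq_one_sub_mul (a : ℂ) (hp : ‖p‖ < 1) : qPoch a p = (1 - a) * qPoch (a * p) p := by
  have hshift : Multipliable fun i : ℕ ↦ 1 - a * p ^ (i + 1) := by
    simpa only [pow_succ', mul_assoc] using multipliable_one_sub_mul_pow (a * p) hp
  rw [qPoch, tprod_eq_zero_mul' (f := fun i ↦ 1 - a * p ^ i) hshift, pow_zero, mul_one]
  simp only [qPoch, pow_succ', mul_assoc]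

lemma one_sub_mul_pow_ne_zero (ha : ‖a‖ < 1) (hp : ‖p‖ ≤ 1) (i : ℕ) : 1 - a * p ^ i ≠ 0 := by
  have hlt : ‖a * p ^ i‖ < 1 := by
    rw [norm_mul, norm_pow]
    exact mul_lt_one_of_nonneg_of_lt_one_left (norm_nonneg _) ha (pow_le_one₀ (norm_nonneg _) hp)
  intro h
  rw [← sub_eq_zero.mp h, norm_one] at hlt
  exact lt_irrefl 1 hlt

lemma qPochFin_ne_zero (ha : ‖a‖ < 1) (hp : ‖p‖ ≤ 1) (k : ℕ) : qPochFin a p k ≠ 0 :=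
  prod_ne_zero_iff.mpr fun i _ ↦ one_sub_mul_pow_ne_zero ha hp i

lemma qPoch_ne_zero (ha : ‖a‖ < 1) (hp : ‖p‖ < 1) : qPoch a p ≠ 0 := by
  simpa only [qPoch, sub_eq_add_neg] using
    tprod_one_add_ne_zero_of_summable
      (fun i ↦ by simpa only [sub_eq_add_neg] using one_sub_mul_pow_ne_zero ha hp.le i)
      (summable_norm_neg_mul_pow a hp)

lemma differentiable_qPoch (hp : ‖p‖ < 1) : Differentiable ℂ (qPoch · p) := by
  intro a
  have hsum : Summable fun i : ℕ ↦ (‖a‖ + 1) * ‖p‖ ^ i :=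
    (summable_geometric_of_lt_one (norm_nonneg p) hp).mul_left _
  have hprod : HasProdLocallyUniformlyOn (fun (i : ℕ) (x : ℂ) ↦ 1 + -(x * p ^ i)) (qPoch · p)
      (Metric.ball 0 (‖a‖ + 1)) := by
    simp only [qPoch, sub_eq_add_neg]
    refine hsum.hasProdLocallyUniformlyOn_nat_one_add Metric.isOpen_ball
      (.of_forall fun i x hx ↦ ?_) fun i ↦ by fun_prop
    rw [norm_neg, norm_mul, norm_pow]
    gcongr
    exact (mem_ball_zero_iff.mp hx).le
  refine DifferentiableOn.differentiableAt (s := Metric.ball 0 (‖a‖ + 1)) ?_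
    (Metric.isOpen_ball.mem_nhds (by simp))
  exact hprod.differentiableOn (.of_forall fun s ↦ by
    simpa [prod_fn] using DifferentiableOn.finsetProd fun _ _ ↦ by fun_prop) Metric.isOpen_ball

lemma gaussBinom_add_eq_div (hp : ‖p‖ < 1) (m k : ℕ) :
    gaussBinom p (m + k) k = qPochFin p p (m + k) / (qPochFin p p k * qPochFin p p m) := by
  rw [eq_div_iff (mul_ne_zero (qPochFin_ne_zero hp hp.le k) (qPochFin_ne_zero hp hp.le m)),
    ← mul_assoc, gaussBinom_add_mul_qPochFin_mul_qPochFin]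

lemma tendsto_gaussBinom_add {ι : Type*} {l : Filter ι} {m k : ι → ℕ} (hp : ‖p‖ < 1)
    (hm : Tendsto m l atTop) (hk : Tendsto k l atTop) :
    Tendsto (fun i ↦ gaussBinom p (m i + k i) (k i)) l (𝓝 (qPoch p p)⁻¹) := by
  have hlim := tendsto_qPochFin p hp
  have h0 := qPoch_ne_zero hp hp
  have h := (hlim.comp (hm.atTop_add_atTop hk)).div
    ((hlim.comp hk).mul (hlim.comp hm)) (mul_ne_zero h0 h0)
  rw [div_mul_cancel_left₀ h0] at h
  exact h.congr fun i ↦ (gaussBinom_add_eq_div hp (m i) (k i)).symm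

lemma exists_norm_gaussBinom_le (hp : ‖p‖ < 1) : ∃ C, ∀ n k, ‖gaussBinom p n k‖ ≤ C := by
  have hlim := tendsto_qPochFin p hp
  obtain ⟨C, hC⟩ := (Metric.isBounded_range_of_tendsto _ hlim).exists_norm_le
  obtain ⟨D, hD⟩ := (Metric.isBounded_range_of_tendsto _
    (hlim.inv₀ (qPoch_ne_zero hp hp))).exists_norm_le
  rw [Set.forall_mem_range] at hC hD
  have hC_nonneg : 0 ≤ C := (norm_nonneg _).trans (hC 0)
  have hD_nonneg : 0 ≤ D := (norm_nonneg _).trans (hD 0)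
  refine ⟨C * (D * D), fun n k ↦ ?_⟩
  rcases lt_or_ge n k with hnk | hkn
  · rw [gaussBinom_eq_zero_of_lt p hnk, norm_zero]
    positivity
  · obtain ⟨m, rfl⟩ := Nat.exists_eq_add_of_le' hkn
    rw [gaussBinom_add_eq_div hp, div_eq_mul_inv, mul_inv, norm_mul, norm_mul]
    gcongr
    exacts [hC _, hD _, hD _]

end QPochhammer

section TripleProduct

/-- The nome `q = e^{πiτ}` of the lattice `ℤ + ℤτ`. -/
noncomputable def nome (τ : ℂ) : ℂ := cexp (π * I * τ)

lemma nome_ne_zero (τ : ℂ) : nome τ ≠ 0 := exp_ne_zero _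

lemma nome_natCast_mul (n : ℕ) (τ : ℂ) : nome (n * τ) = nome τ ^ n := by
  rw [nome, nome, ← exp_nat_mul, mul_left_comm]

lemma norm_nome_lt_one {τ : ℂ} (hτ : 0 < τ.im) : ‖nome τ‖ < 1 := by
  rw [nome, norm_exp, Real.exp_lt_one_iff]
  simpa using mul_pos Real.pi_pos hτ

lemma norm_nome_sq_lt_one {τ : ℂ} (hτ : 0 < τ.im) : ‖nome τ ^ 2‖ < 1 := by
  rw [norm_pow]
  exact pow_lt_one₀ (norm_nonneg _) (norm_nome_lt_one hτ) two_ne_zero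

lemma jacobiTheta₂_term_eq_nome_pow_mul_zpow (n : ℤ) (z τ : ℂ) :
    jacobiTheta₂_term n z τ = nome τ ^ n.natAbs ^ 2 * cexp (2 * π * I * z) ^ n := by
  have hsq : ((n.natAbs ^ 2 : ℕ) : ℂ) = n ^ 2 := by
    rw [← Int.cast_natCast, Nat.cast_pow, Int.natAbs_sq, Int.cast_pow]
  rw [jacobiTheta₂_term, nome, ← exp_nat_mul, ← exp_int_mul, ← exp_add, hsq]
  ring_nf

lemma tendsto_sum_gaussBinom_mul {p : ℂ} (hp : ‖p‖ < 1) {f : ℤ → ℂ} (hf : Summable f) :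
    Tendsto (fun N : ℕ ↦ ∑ n ∈ Icc (-N : ℤ) N, gaussBinom p (2 * N) (N + n).toNat * f n) atTop
      (𝓝 ((qPoch p p)⁻¹ * ∑' n, f n)) := by
  obtain ⟨C, hC⟩ := exists_norm_gaussBinom_le hp
  rw [← tsum_mul_left]
  simp_rw [sum_eq_tsum_indicator (L := SummationFilter.unconditional ℤ)]
  refine tendsto_tsum_of_dominated_convergence (bound := fun n ↦ C * ‖f n‖) (hf.norm.mul_left C)
    (fun n ↦ ?_) (.of_forall fun N n ↦ ?_)
  · have hadd : Tendsto (fun N : ℕ ↦ (N + n).toNat) atTop atTop :=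
      tendsto_atTop.mpr fun b ↦ (eventually_ge_atTop (b + n.natAbs)).mono fun N hN ↦ by lia
    have hsub : Tendsto (fun N : ℕ ↦ (N - n).toNat) atTop atTop :=
      tendsto_atTop.mpr fun b ↦ (eventually_ge_atTop (b + n.natAbs)).mono fun N hN ↦ by lia
    refine ((tendsto_gaussBinom_add hp hsub hadd).mul_const (f n)).congr' ?_
    filter_upwards [eventually_ge_atTop n.natAbs] with N hN
    rw [Set.indicator_of_mem (by simp only [coe_Icc, Set.mem_Icc]; lia),
      show (N - n : ℤ).toNat + (N + n : ℤ).toNat = 2 * N by lia]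
  · refine (norm_indicator_le_norm_self _ _).trans ?_
    rw [norm_mul]
    exact mul_le_mul_of_nonneg_right (hC _ _) (norm_nonneg _)

theorem jacobiTheta₂_eq_qPoch (z : ℂ) {τ : ℂ} (hτ : 0 < τ.im) :
    jacobiTheta₂ z τ = qPoch (nome τ ^ 2) (nome τ ^ 2) *
      (qPoch (-(cexp (2 * π * I * z) * nome τ)) (nome τ ^ 2) *
        qPoch (-((cexp (2 * π * I * z))⁻¹ * nome τ)) (nome τ ^ 2)) := by
  have hp := norm_nome_sq_lt_one hτ
  have hsum := tendsto_sum_gaussBinom_mul hp (hasSum_jacobiTheta₂_term z hτ).summable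
  have hprod := (tendsto_qPochFin (-(cexp (2 * π * I * z) * nome τ)) hp).mul
    (tendsto_qPochFin (-((cexp (2 * π * I * z))⁻¹ * nome τ)) hp)
  rw [jacobiTheta₂, ← inv_mul_eq_iff_eq_mul₀ (qPoch_ne_zero hp hp)]
  refine tendsto_nhds_unique hsum (hprod.congr fun N ↦ ?_)
  simp only [jacobiTheta₂_term_eq_nome_pow_mul_zpow,
    ← prod_mul_inv_eq_sum_gaussBinom (nome τ) (exp_ne_zero (2 * π * I * z)), qPochFin,
    ← prod_mul_distrib]
  exact prod_congr rfl fun i _ ↦ by ring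

end TripleProduct

section Theta1

variable {τ : ℂ}

lemma theta1_eq_jacobiTheta₂ (z : ℂ) (hτ : 0 < τ.im) :
    theta1 z τ = -I * cexp (π * I * τ / 4) *
      (cexp (I * z) * jacobiTheta₂ (z / π + (1 + τ) / 2) τ) := by
  have hterm (m : ℤ) : cexp (π * I * τ / 4) * cexp (I * z) *
      jacobiTheta₂_term m (z / π + (1 + τ) / 2) τ =
        (-1) ^ m * cexp (π * I * τ * (2 * m + 1) ^ 2 / 4) * cexp ((2 * m + 1) * z * I) := by
    rw [jacobiTheta₂_term, ← exp_pi_mul_I, ← exp_int_mul, ← exp_add, ← exp_add, ← exp_add,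
      ← exp_add]
    congr 1
    field_simp
    ring
  have h := ((hasSum_jacobiTheta₂_term (z / π + (1 + τ) / 2) hτ).nat_add_neg_add_one.mul_left
    (-I * cexp (π * I * τ / 4) * cexp (I * z))).tsum_eq
  rw [theta1, ← tsum_mul_left, ← mul_assoc _ (cexp (I * z)), ← h]
  refine tsum_congr fun n ↦ ?_
  have hpos := hterm n
  have hneg := hterm (-(n + 1))
  have hsign : (-1 : ℂ) ^ (-(n + 1) : ℤ) = -(-1) ^ n := by
    rw [zpow_neg, ← inv_zpow, inv_neg_one, zpow_add_one₀ (by norm_num), zpow_natCast, mul_neg_one]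
  have hodd : (2 * ((-(n + 1) : ℤ) : ℂ) + 1) = -(2 * n + 1) := by push_cast; ring
  rw [hsign, hodd, neg_sq] at hneg
  rw [zpow_natCast, Int.cast_natCast] at hpos
  rw [sin, ← neg_mul ((2 * n + 1 : ℂ)) z]
  linear_combination I * hpos + I * hneg

theorem theta1_eq_qPoch (z : ℂ) (hτ : 0 < τ.im) :
    theta1 z τ = 2 * cexp (π * I * τ / 4) * sin z *
      (qPoch (nome τ ^ 2) (nome τ ^ 2) * qPoch (nome τ ^ 2 * cexp (2 * I * z)) (nome τ ^ 2) *
        qPoch (nome τ ^ 2 * cexp (-(2 * I * z))) (nome τ ^ 2)) := by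
  have hw : cexp (2 * π * I * (z / π + (1 + τ) / 2)) = -(cexp (2 * I * z) * nome τ) := by
    rw [show 2 * π * I * (z / π + (1 + τ) / 2) = 2 * I * z + π * I * τ + π * I by
      field_simp; ring, exp_add, exp_pi_mul_I, exp_add, nome, mul_neg_one]
  have hsin : -I * (cexp (I * z) * (1 - cexp (-(2 * I * z)))) = 2 * sin z := by
    rw [mul_sub, mul_one, ← exp_add, sin, show I * z + -(2 * I * z) = -z * I by ring, mul_comm I z]
    ring
  have hplus : -(-(cexp (2 * I * z) * nome τ) * nome τ) = nome τ ^ 2 * cexp (2 * I * z) := by ring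
  have hminus : -((-(cexp (2 * I * z) * nome τ))⁻¹ * nome τ) = cexp (-(2 * I * z)) := by
    rw [exp_neg, inv_neg, mul_inv, neg_mul, neg_neg, inv_mul_cancel_right₀ (nome_ne_zero τ)]
  rw [theta1_eq_jacobiTheta₂ z hτ, jacobiTheta₂_eq_qPoch _ hτ, hw, hplus, hminus,
    qPoch_eq_one_sub_mul (cexp (-(2 * I * z))) (norm_nome_sq_lt_one hτ),
    mul_comm (cexp (-(2 * I * z))) (nome τ ^ 2), mul_right_comm 2 _ (sin z), ← hsin]
  ring

lemma theta1_zero_left (τ : ℂ) : theta1 0 τ = 0 := by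
  simp [theta1]

lemma hasDerivAt_theta1_zero (hτ : 0 < τ.im) :
    HasDerivAt (theta1 · τ) (2 * cexp (π * I * τ / 4) * qPoch (nome τ ^ 2) (nome τ ^ 2) ^ 3) 0 := by
  have hq := differentiable_qPoch (norm_nome_sq_lt_one hτ)
  have hprod : DifferentiableAt ℂ (fun z ↦ qPoch (nome τ ^ 2) (nome τ ^ 2) *
      qPoch (nome τ ^ 2 * cexp (2 * I * z)) (nome τ ^ 2) *
        qPoch (nome τ ^ 2 * cexp (-(2 * I * z))) (nome τ ^ 2)) 0 := by
    fun_prop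
  have h := ((hasDerivAt_sin 0).const_mul (2 * cexp (π * I * τ / 4))).mul hprod.hasDerivAt
  simp only [theta1_eq_qPoch _ hτ]
  refine h.congr_deriv ?_
  simp only [cos_zero, sin_zero, mul_zero, neg_zero, exp_zero, mul_one, zero_mul, add_zero]
  ring

lemma theta1_mul_pi_div_two (hτ : 0 < τ.im) :
    theta1 (τ * (π / 2)) τ = I * cexp (-(π * I * τ / 4)) *
      (qPoch (nome τ ^ 2) (nome τ ^ 2) * qPoch (nome τ) (nome τ ^ 2) ^ 2) := by
  have hexp : cexp (2 * I * (τ * (π / 2))) = nome τ := by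
    rw [nome]; ring_nf
  have hexp_neg : nome τ ^ 2 * cexp (-(2 * I * (τ * (π / 2)))) = nome τ := by
    rw [exp_neg, hexp, sq, mul_inv_cancel_right₀ (nome_ne_zero τ)]
  have hsin : 2 * cexp (π * I * τ / 4) * sin (τ * (π / 2)) =
      I * cexp (-(π * I * τ / 4)) * (1 - nome τ) := by
    rw [sin, nome, mul_sub, mul_one, mul_assoc I, ← exp_add, mul_assoc 2,
      show -(π * I * τ / 4) + π * I * τ = π * I * τ / 4 + τ * (π / 2) * I by ring,
      show -(π * I * τ / 4) = π * I * τ / 4 + -(τ * (π / 2)) * I by ring, exp_add, exp_add]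
    ring
  rw [theta1_eq_qPoch _ hτ, hsin, hexp, hexp_neg, mul_comm (nome τ ^ 2) (nome τ), sq (qPoch _ _),
    qPoch_eq_one_sub_mul (nome τ) (norm_nome_sq_lt_one hτ)]
  ring

lemma im_neg_one_div_pos (hτ : 0 < τ.im) : 0 < (-1 / τ).im := by
  simpa [div_eq_mul_inv] using UpperHalfPlane.im_inv_neg_coe_pos ⟨τ, hτ⟩

theorem theta1_neg_one_div (z : ℂ) (hτ : 0 < τ.im) :
    theta1 z (-1 / τ) =
      -I * (-I * τ) ^ (1 / 2 : ℂ) * cexp (I * τ * z ^ 2 / π) * theta1 (τ * z) τ := by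
  have hτ0 : τ ≠ 0 := by rintro rfl; simp at hτ
  have hs : (-I * τ) ^ (1 / 2 : ℂ) ≠ 0 := by simp [cpow_eq_zero_iff, hτ0]
  have h := jacobiTheta₂_functional_equation (τ * z / π + (τ - 1) / 2) τ
  rw [← jacobiTheta₂_add_left, show τ * z / π + (τ - 1) / 2 + 1 = τ * z / π + (1 + τ) / 2 by ring,
    show (τ * z / π + (τ - 1) / 2) / τ = z / π + (1 + -1 / τ) / 2 by field_simp; ring,
    one_div, mul_assoc, eq_inv_mul_iff_mul_eq₀ hs] at h
  have hexp : cexp (π * I * τ / 4) * cexp (I * (τ * z)) * cexp (I * τ * z ^ 2 / π) *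
      cexp (-π * I * (τ * z / π + (τ - 1) / 2) ^ 2 / τ) =
        I * (cexp (π * I * (-1 / τ) / 4) * cexp (I * z)) := by
    conv_rhs => arg 1; rw [← exp_pi_div_two_mul_I]
    rw [← exp_add, ← exp_add, ← exp_add, ← exp_add, ← exp_add]
    congr 1
    field_simp
    ring
  rw [theta1_eq_jacobiTheta₂ z (im_neg_one_div_pos hτ), theta1_eq_jacobiTheta₂ (τ * z) hτ]
  calc _ = -(I * (cexp (π * I * (-1 / τ) / 4) * cexp (I * z))) *
        jacobiTheta₂ (z / π + (1 + -1 / τ) / 2) (-1 / τ) := by ring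
    _ = I * I * (cexp (π * I * τ / 4) * cexp (I * (τ * z)) * cexp (I * τ * z ^ 2 / π)) *
        ((-I * τ) ^ (1 / 2 : ℂ) * jacobiTheta₂ (τ * z / π + (1 + τ) / 2) τ) := by
        rw [h, I_mul_I, ← hexp]; ring
    _ = _ := by ring

lemma theta1'_zero_neg_one_div (hτ : 0 < τ.im) :
    theta1' 0 (-1 / τ) = -I * (-I * τ) ^ (1 / 2 : ℂ) *
      (2 * cexp (π * I * τ / 4) * qPoch (nome τ ^ 2) (nome τ ^ 2) ^ 3 * τ) := by
  have hθ := hasDerivAt_theta1_zero hτ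
  rw [← mul_zero τ] at hθ
  have hcomp := hθ.comp 0 (hasDerivAt_const_mul τ)
  have hexp : DifferentiableAt ℂ (fun z ↦ -I * (-I * τ) ^ (1 / 2 : ℂ) *
      cexp (I * τ * z ^ 2 / π)) 0 := by
    fun_prop
  rw [theta1', funext fun z ↦ theta1_neg_one_div z hτ]
  refine (hexp.hasDerivAt.mul hcomp).deriv.trans ?_
  simp [theta1_zero_left]

lemma theta1'_div_theta1_neg_one_div (hτ : 0 < τ.im) :
    theta1' 0 (-1 / τ) / theta1 (π / 2) (-1 / τ) =
      -I * τ * (2 * cexp (π * I * τ / 4) * qPoch (nome τ ^ 2) (nome τ ^ 2) ^ 2 /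
        qPoch (nome τ) (nome τ ^ 2) ^ 2) := by
  have hτ0 : τ ≠ 0 := by rintro rfl; simp at hτ
  have hexp : cexp (I * τ * (π / 2) ^ 2 / π) = cexp (π * I * τ / 4) := by
    congr 1
    field_simp
    norm_num
  rw [theta1'_zero_neg_one_div hτ, theta1_neg_one_div (π / 2) hτ, theta1_mul_pi_div_two hτ, hexp,
    exp_neg]
  field_simp
  rw [I_sq]
  ring

end Theta1

theorem theta1_deriv_quotient_general {c τ : ℂ} (hτ : 0 < τ.im) (hcτ : 0 < (c * τ).im) :
    1 / c * (theta1' 0 (-1 / τ / c) / theta1' 0 (-1 / τ)) *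
        (theta1 (π / 2) (-1 / τ) / theta1 (π / 2) (-1 / τ / c)) =
      cexp (π * I * τ * (c - 1) / 4) * qPoch (nome (c * τ) ^ 2) (nome (c * τ) ^ 2) ^ 2 *
        qPoch (nome τ) (nome τ ^ 2) ^ 2 /
        (qPoch (nome (c * τ)) (nome (c * τ) ^ 2) ^ 2 * qPoch (nome τ ^ 2) (nome τ ^ 2) ^ 2) := by
  have hc : c ≠ 0 := by rintro rfl; simp at hcτ
  have hτ0 : τ ≠ 0 := by rintro rfl; simp at hτ
  have hτ' : -1 / (c * τ) = -1 / τ / c := by rw [div_div, mul_comm]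
  have hexp : cexp (π * I * τ * (c - 1) / 4) =
      cexp (π * I * (c * τ) / 4) / cexp (π * I * τ / 4) := by
    rw [← exp_sub]; ring_nf
  calc _ = 1 / c * (theta1' 0 (-1 / τ / c) / theta1 (π / 2) (-1 / τ / c)) /
        (theta1' 0 (-1 / τ) / theta1 (π / 2) (-1 / τ)) := by
        simp only [div_eq_mul_inv, mul_inv, inv_inv]; ring
    _ = _ := by
        rw [← hτ', theta1'_div_theta1_neg_one_div hτ, theta1'_div_theta1_neg_one_div hcτ, hexp]
        simp only [div_eq_mul_inv, mul_inv, inv_inv]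
        field_simp

theorem theta1_deriv_quotient (n : ℕ) (hn : 0 < n) (τ : ℂ) (hτ : 0 < τ.im)
    (q : ℂ) (hq : q = Complex.exp (Real.pi * Complex.I * τ))
    (τ' : ℂ) (hτ' : τ' = -1 / τ) :
    (1 / (n : ℂ)) * (theta1' 0 (τ' / n) / theta1' 0 τ') *
        (theta1 ((Real.pi : ℂ) / 2) τ' / theta1 ((Real.pi : ℂ) / 2) (τ' / n)) =
      Complex.exp (Real.pi * Complex.I * τ * ((n : ℂ) - 1) / 4) *
        (qPoch (q ^ (2 * n)) (q ^ (2 * n))) ^ 2 * (qPoch q (q ^ 2)) ^ 2 /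
        ((qPoch (q ^ n) (q ^ (2 * n))) ^ 2 * (qPoch (q ^ 2) (q ^ 2)) ^ 2) := by
  rw [show q = nome τ from hq, hτ', mul_comm 2 n, pow_mul, ← nome_natCast_mul]
  exact theta1_deriv_quotient_general hτ (by simpa using mul_pos (Nat.cast_pos.mpr hn) hτ)
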